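/- Let (A,Λ) be an associative form ring with 1, n ≥ 3, and let (I,Γ), (J,Δ) be form ideals of (A,Λ). For any i ≠ ±j, any a ∈ I, b ∈ J, and any x ∈ EU(2n,A,Λ), one has x·Y_ij(a,b)·x⁻¹ ≡ Y_ij(a,b) modulo EU(2n,(I,Γ)∘(J,Δ)), i.e. x·Y_ij(a,b)·x⁻¹·Y_ij(a,b)⁻¹ ∈ EU(2n,(I,Γ)∘(J,Δ)). -/

import Mathlib

open Matrix
open scoped commutatorElement

/-- Bak's form ring data on a ring `A`: an involution `bar`, a central symmetry
`λ` with `λ λ̄ = 1`, and a form parameter `Λ`. -/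
structure FormRingData (A : Type*) [Ring A] where
  bar : A →+ A
  bar_mul : ∀ a b : A, bar (a * b) = bar b * bar a
  bar_bar : ∀ a : A, bar (bar a) = a
  lam : A
  lam_comm : ∀ a : A, lam * a = a * lam
  lam_bar : lam * bar lam = 1
  Lambda : AddSubgroup A
  lambdaMin_mem : ∀ c : A, c - lam * bar c ∈ Lambda
  lambdaMax_mem : ∀ x ∈ Lambda, x = -(lam * bar x)
  lambda_conj : ∀ (c : A), ∀ x ∈ Lambda, c * x * bar c ∈ Lambda

namespace FormRingData

variable {A : Type*} [Ring A]

/-- Integral powers of the symmetry `λ`; negative powers use `λ̄ = λ⁻¹`. -/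
def lpow (D : FormRingData A) (k : ℤ) : A :=
  if 0 ≤ k then D.lam ^ k.toNat else (D.bar D.lam) ^ (-k).toNat

end FormRingData

/-- The index set `Ω = {1,…,n,−n,…,−1}`, coded as `Fin n × Bool`
(second component `true` = positive index). -/
abbrev Idx (n : ℕ) := Fin n × Bool

namespace Idx

/-- The involution `i ↦ −i` on indices. -/
def neg {n : ℕ} (i : Idx n) : Idx n := (i.1, !i.2)

/-- The sign `ε(i) ∈ {±1}`. -/
def eps {n : ℕ} (i : Idx n) : ℤ := if i.2 then 1 else -1

theorem neg_ne {n : ℕ} (i : Idx n) : neg i ≠ i := by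
  simp [neg, Prod.ext_iff]

theorem neg_injective {n : ℕ} : Function.Injective (neg (n := n)) := by
  intro i j h
  simp only [neg, Prod.mk.injEq] at h
  refine Prod.ext h.1 ?_
  have h2 := h.2
  cases hi : i.2 <;> cases hj : j.2 <;> simp_all

theorem neg_neg {n : ℕ} (i : Idx n) : neg (neg i) = i := by
  simp [neg]

end Idx

/-- `GL(2n, A)`, realised as the units of the `Ω × Ω` matrix ring over `A`. -/
abbrev GLn (A : Type*) [Ring A] (n : ℕ) := (Matrix (Idx n) (Idx n) A)ˣ

section aux

theorem one_add_mul_one_sub {R : Type*} [Ring R] {X : R} (h : X * X = 0) :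
    (1 + X) * (1 - X) = 1 := by
  have hh : (1 + X) * (1 - X) = 1 - X * X := by noncomm_ring
  rw [hh, h, sub_zero]

theorem one_sub_mul_one_add {R : Type*} [Ring R] {X : R} (h : X * X = 0) :
    (1 - X) * (1 + X) = 1 := by
  have hh : (1 - X) * (1 + X) = 1 - X * X := by noncomm_ring
  rw [hh, h, sub_zero]

theorem stdBasisMatrix_neg' {A : Type*} [Ring A] {n : ℕ} (i j : Idx n) (c : A) :
    Matrix.single i j (-c) = -Matrix.single i j c := by
  refine eq_neg_of_add_eq_zero_left ?_
  rw [← Matrix.single_add]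
  simp

end aux

namespace FormRingData

variable {A : Type*} [Ring A] {n : ℕ}

/-- The off-diagonal part of a short root element. -/
def Xmat (D : FormRingData A) (i j : Idx n) (c : A) : Matrix (Idx n) (Idx n) A :=
  Matrix.single i j c -
    Matrix.single (Idx.neg j) (Idx.neg i) (D.lpow ((Idx.eps j - Idx.eps i) / 2) * D.bar c)

theorem Xmat_mul (D : FormRingData A) {i j : Idx n} (hij : i ≠ j) (c c' : A) :
    D.Xmat i j c * D.Xmat i j c' = 0 := by
  unfold Xmat
  rw [sub_mul, mul_sub, mul_sub,
    Matrix.single_mul_single_of_ne _ _ _ _ (Ne.symm hij),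
    Matrix.single_mul_single_of_ne _ _ _ _ (Ne.symm (Idx.neg_ne j)),
    Matrix.single_mul_single_of_ne _ _ _ _ (Idx.neg_ne i),
    Matrix.single_mul_single_of_ne _ _ _ _ (fun h => hij (Idx.neg_injective h))]
  simp

theorem Xmat_neg (D : FormRingData A) (i j : Idx n) (c : A) :
    D.Xmat i j (-c) = -D.Xmat i j c := by
  unfold Xmat
  rw [map_neg, mul_neg, stdBasisMatrix_neg', stdBasisMatrix_neg']
  abel

/-- The elementary short root unipotent `T_{ij}(c)`, for `i ≠ ±j`
(with junk value `1` when `i = j`). -/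
def TS (D : FormRingData A) (i j : Idx n) (c : A) : GLn A n :=
  if h : i = j then 1 else
    { val := 1 + D.Xmat i j c
      inv := 1 + D.Xmat i j (-c)
      val_inv := by
        rw [D.Xmat_neg, ← sub_eq_add_neg]
        exact one_add_mul_one_sub (D.Xmat_mul h c c)
      inv_val := by
        rw [D.Xmat_neg, ← sub_eq_add_neg]
        exact one_sub_mul_one_add (D.Xmat_mul h c c) }

/-- The elementary long root unipotent `T_{i,−i}(c)`. -/
def TL (D : FormRingData A) (i : Idx n) (c : A) : GLn A n where
  val := 1 + Matrix.single i (Idx.neg i) c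
  inv := 1 + Matrix.single i (Idx.neg i) (-c)
  val_inv := by
    rw [stdBasisMatrix_neg', ← sub_eq_add_neg]
    exact one_add_mul_one_sub (Matrix.single_mul_single_of_ne _ _ _ _ (Idx.neg_ne i) _)
  inv_val := by
    rw [stdBasisMatrix_neg', ← sub_eq_add_neg]
    exact one_sub_mul_one_add (Matrix.single_mul_single_of_ne _ _ _ _ (Idx.neg_ne i) _)

/-- The elementary unitary transvection `T_{ij}(c)` (long or short root type
according to whether `j = −i`). -/
def T (D : FormRingData A) (i j : Idx n) (c : A) : GLn A n :=
  if j = Idx.neg i then D.TL i c else D.TS i j c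

/-- The elementary commutator `Y_{ij}(a,b) = [T_{ij}(a), T_{ji}(b)]`. -/
def Y (D : FormRingData A) (i j : Idx n) (a b : A) : GLn A n :=
  ⁅D.T i j a, D.T j i b⁆

/-- The elementary conjugate `Z_{ij}(a,c) = T_{ji}(c) T_{ij}(a) T_{ji}(−c)`. -/
def Z (D : FormRingData A) (i j : Idx n) (a c : A) : GLn A n :=
  D.T j i c * D.T i j a * D.T j i (-c)

/-- The set of elementary unitary transvections of level `(I,Γ)`. -/
def transvGen (D : FormRingData A) (n : ℕ) (I Γ : AddSubgroup A) : Set (GLn A n) :=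
  {x | ∃ i j : Idx n, i ≠ j ∧ i ≠ Idx.neg j ∧ ∃ c ∈ I, x = D.TS i j c} ∪
    {x | ∃ i : Idx n, ∃ g ∈ Γ, x = D.TL i (D.lpow (-(Idx.eps i + 1) / 2) * g)}

/-- The unrelative elementary subgroup `FU(2n, I, Γ)`. -/
def FU (D : FormRingData A) (n : ℕ) (I Γ : AddSubgroup A) : Subgroup (GLn A n) :=
  Subgroup.closure (D.transvGen n I Γ)

/-- The absolute elementary unitary group `EU(2n, A, Λ)`. -/
def EUmax (D : FormRingData A) (n : ℕ) : Subgroup (GLn A n) :=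
  D.FU n ⊤ D.Lambda

/-- The relative elementary subgroup `EU(2n, I, Γ)`: the normal closure of
`FU(2n, I, Γ)` in `EU(2n, A, Λ)`. -/
def EU (D : FormRingData A) (n : ℕ) (I Γ : AddSubgroup A) : Subgroup (GLn A n) :=
  Subgroup.closure {x | ∃ g ∈ D.EUmax n, ∃ t ∈ D.transvGen n I Γ, x = g * t * g⁻¹}

/-- The additive subgroup generated by products `st`, `s ∈ S`, `t ∈ T`. -/
def mulSub (S T : AddSubgroup A) : AddSubgroup A :=
  AddSubgroup.closure {x | ∃ a ∈ S, ∃ b ∈ T, x = a * b}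

/-- The symmetrised product `ST + TS` of two (additive subgroups underlying)
two-sided ideals. -/
def symI (S T : AddSubgroup A) : AddSubgroup A :=
  mulSub S T ⊔ mulSub T S

/-- The minimal relative form parameter `Γ_min(K)` of level `K`. -/
def gammaMin (D : FormRingData A) (K : AddSubgroup A) : AddSubgroup A :=
  AddSubgroup.closure
    ({x | ∃ a ∈ K, x = a - D.lam * D.bar a} ∪
      {x | ∃ a ∈ K, ∃ c ∈ D.Lambda, x = a * c * D.bar a})

/-- The relative form parameter `ˢΓ = ⟨ b γ b̄ ∣ b ∈ S, γ ∈ Γ ⟩`. -/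
def conjPar (D : FormRingData A) (S Γ : AddSubgroup A) : AddSubgroup A :=
  AddSubgroup.closure {x | ∃ b ∈ S, ∃ g ∈ Γ, x = b * g * D.bar b}

/-- The relative form parameter of the symmetrised product
`(I,Γ)∘(J,Δ) = (IJ+JI, Γ_min(IJ+JI) + ᴶΓ + ᴵΔ)`. -/
def symG (D : FormRingData A) (I Γ J Δ : AddSubgroup A) : AddSubgroup A :=
  D.gammaMin (symI I J) ⊔ D.conjPar J Γ ⊔ D.conjPar I Δ

/-- The elementary subgroup `EU(2n, (I,Γ)∘(J,Δ))` of the symmetrised product. -/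
def EUsym (D : FormRingData A) (n : ℕ) (I Γ J Δ : AddSubgroup A) : Subgroup (GLn A n) :=
  D.EU n (symI I J) (D.symG I Γ J Δ)

/-- Position-dependent membership `a ∈ (I,Γ)` at position `(i,j)`:
`a ∈ I` for a short root position, `a ∈ λ^{−(ε(i)+1)/2}Γ` for a long one. -/
def pmem (D : FormRingData A) (I Γ : AddSubgroup A) {n : ℕ} (i j : Idx n) (a : A) : Prop :=
  if j = Idx.neg i then ∃ g ∈ Γ, a = D.lpow (-(Idx.eps i + 1) / 2) * g else a ∈ I

end FormRingData

/-- A form ideal `(I,Γ)` of the form ring `(A,Λ)`. -/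
structure FormIdeal {A : Type*} [Ring A] (D : FormRingData A) where
  I : AddSubgroup A
  Gamma : AddSubgroup A
  mul_mem_left : ∀ (c : A), ∀ x ∈ I, c * x ∈ I
  mul_mem_right : ∀ (c : A), ∀ x ∈ I, x * c ∈ I
  bar_mem : ∀ x ∈ I, D.bar x ∈ I
  gammaMin_le : D.gammaMin I ≤ Gamma
  gamma_le_I : Gamma ≤ I
  gamma_le_Lambda : Gamma ≤ D.Lambda
  gamma_conj : ∀ (c : A), ∀ x ∈ Gamma, c * x * D.bar c ∈ Gamma

namespace FormRingData

variable {A : Type*} [Ring A] {n : ℕ}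

theorem Xmat_mul_zero (D : FormRingData A) {i j k l : Idx n} (h1 : j ≠ k)
    (h2 : j ≠ Idx.neg l) (h3 : Idx.neg i ≠ k) (h4 : i ≠ l) (c c' : A) :
    D.Xmat i j c * D.Xmat k l c' = 0 := by
  unfold Xmat
  rw [sub_mul, mul_sub, mul_sub,
    Matrix.single_mul_single_of_ne _ _ _ _ h1,
    Matrix.single_mul_single_of_ne _ _ _ _ h2,
    Matrix.single_mul_single_of_ne _ _ _ _ h3,
    Matrix.single_mul_single_of_ne _ _ _ _ (fun h => h4 (Idx.neg_injective h))]
  simp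

theorem Xmat_add (D : FormRingData A) (i j : Idx n) (c c' : A) :
    D.Xmat i j (c + c') = D.Xmat i j c + D.Xmat i j c' := by
  unfold Xmat
  rw [map_add, mul_add, Matrix.single_add, Matrix.single_add]
  abel

theorem ne_of_fst {i j : Idx n} (h : i.1 ≠ j.1) : i ≠ j := fun e => h (congrArg Prod.fst e)

theorem TS_val (D : FormRingData A) {i j : Idx n} (h : i.1 ≠ j.1) (c : A) :
    ((D.TS i j c : GLn A n) : Matrix (Idx n) (Idx n) A) = 1 + D.Xmat i j c := by
  unfold TS
  rw [dif_neg (ne_of_fst h)]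

theorem TS_add (D : FormRingData A) {i j : Idx n} (h : i.1 ≠ j.1) (c c' : A) :
    D.TS i j (c + c') = D.TS i j c * D.TS i j c' := by
  apply Units.ext
  rw [Units.val_mul, TS_val D h, TS_val D h, TS_val D h, Xmat_add, mul_add, add_mul, add_mul,
    D.Xmat_mul (ne_of_fst h)]
  simp only [one_mul, mul_one, add_zero]
  abel

theorem TS_zero (D : FormRingData A) {i j : Idx n} (h : i.1 ≠ j.1) :
    D.TS i j 0 = 1 := by
  have := D.TS_add h 0 0
  rw [add_zero] at this
  exact (left_eq_mul.mp this)

theorem TS_neg (D : FormRingData A) {i j : Idx n} (h : i.1 ≠ j.1) (c : A) :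
    D.TS i j (-c) = (D.TS i j c)⁻¹ := by
  rw [eq_inv_iff_mul_eq_one, ← D.TS_add h, neg_add_cancel, D.TS_zero h]

theorem TS_commute (D : FormRingData A) {i j k l : Idx n} (hij : i.1 ≠ j.1) (hkl : k.1 ≠ l.1)
    (h1 : j.1 ≠ k.1) (h2 : i.1 ≠ l.1) (h3 : j ≠ Idx.neg l) (h4 : Idx.neg i ≠ k) (c c' : A) :
    Commute (D.TS i j c) (D.TS k l c') := by
  apply Units.ext
  rw [Units.val_mul, Units.val_mul, TS_val D hij, TS_val D hkl, mul_add, add_mul, add_mul,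
    mul_add, add_mul, add_mul, D.Xmat_mul_zero (ne_of_fst h1) h3 h4 (ne_of_fst h2),
    D.Xmat_mul_zero (ne_of_fst (Ne.symm h2)) (fun e => h3 (by rw [e, Idx.neg_neg]))
      (fun e => h4 (by rw [← e, Idx.neg_neg])) (ne_of_fst (Ne.symm h1))]
  simp only [one_mul, mul_one, add_zero]
  abel

theorem bar_one (D : FormRingData A) : D.bar 1 = 1 := by
  have := D.bar_mul 1 (D.bar 1)
  rw [one_mul, D.bar_bar, one_mul] at this
  exact this.symm

theorem bar_lam_mul (D : FormRingData A) : D.bar D.lam * D.lam = 1 := by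
  rw [← D.lam_comm, D.lam_bar]

theorem bar_lam_comm (D : FormRingData A) (a : A) : D.bar D.lam * a = a * D.bar D.lam := by
  have := congrArg D.bar (D.lam_comm (D.bar a))
  rw [D.bar_mul, D.bar_mul, D.bar_bar] at this
  exact this.symm

theorem lpow_zero (D : FormRingData A) : D.lpow 0 = 1 := by simp [lpow]
theorem lpow_one (D : FormRingData A) : D.lpow 1 = D.lam := by simp [lpow]
theorem lpow_neg_one (D : FormRingData A) : D.lpow (-1) = D.bar D.lam := by simp [lpow]

/-- relative power -/
def lp (D : FormRingData A) (p q : Bool) : A :=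
  if p = q then 1 else if q then D.lam else D.bar D.lam

theorem lpow_eps (D : FormRingData A) (i j : Idx n) :
    D.lpow ((Idx.eps j - Idx.eps i) / 2) = D.lp i.2 j.2 := by
  unfold Idx.eps lp
  cases i.2 <;> cases j.2 <;> simp [lpow_zero, lpow_one, lpow_neg_one]

theorem lp_comm (D : FormRingData A) (p q : Bool) (a : A) : D.lp p q * a = a * D.lp p q := by
  cases p <;> cases q <;> simp [lp, D.lam_comm, D.bar_lam_comm]

theorem lp_mul (D : FormRingData A) (p q r : Bool) : D.lp q r * D.lp p q = D.lp p r := by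
  cases p <;> cases q <;> cases r <;> simp [lp, D.lam_bar, D.bar_lam_mul]

theorem bar_lp (D : FormRingData A) (p q : Bool) : D.bar (D.lp p q) = D.lp q p := by
  cases p <;> cases q <;> simp [lp, D.bar_one, D.bar_bar]

theorem lp_neg (D : FormRingData A) (p q : Bool) : D.lp (!p) (!q) = D.lp q p := by
  cases p <;> cases q <;> simp [lp]

theorem Xmat_comm (D : FormRingData A) {i j l : Idx n} (hij : i.1 ≠ j.1) (hjl : j.1 ≠ l.1)
    (hil : i.1 ≠ l.1) (a c : A) :
    D.Xmat i j a * D.Xmat j l c - D.Xmat j l c * D.Xmat i j a = D.Xmat i l (a * c) := by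
  unfold Xmat
  simp only [lpow_eps]
  simp only [sub_mul, mul_sub, Matrix.single_mul_single_same]
  rw [Matrix.single_mul_single_of_ne _ _ _ _ (show j ≠ Idx.neg l from ne_of_fst hjl),
    Matrix.single_mul_single_of_ne _ _ _ _ (show Idx.neg i ≠ j from ne_of_fst hij),
    Matrix.single_mul_single_of_ne _ _ _ _ (show Idx.neg i ≠ Idx.neg l from ne_of_fst hil),
    Matrix.single_mul_single_of_ne _ _ _ _ (show l ≠ i from ne_of_fst hil.symm),
    Matrix.single_mul_single_of_ne _ _ _ _ (show l ≠ Idx.neg j from ne_of_fst hjl.symm),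
    Matrix.single_mul_single_of_ne _ _ _ _ (show Idx.neg j ≠ i from ne_of_fst hij.symm)]
  have : D.lp j.2 l.2 * D.bar c * (D.lp i.2 j.2 * D.bar a) = D.lp i.2 l.2 * D.bar (a * c) := by
    rw [D.bar_mul, ← D.lp_mul i.2 j.2 l.2, mul_assoc, mul_assoc, ← mul_assoc (D.bar c),
      ← D.lp_comm _ _ (D.bar c), mul_assoc]
  rw [this]
  abel

theorem TS_rel (D : FormRingData A) {i j l : Idx n} (hij : i.1 ≠ j.1) (hjl : j.1 ≠ l.1)
    (hil : i.1 ≠ l.1) (a c : A) :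
    D.TS i j a * D.TS j l c * (D.TS i j a)⁻¹ = D.TS i l (a * c) * D.TS j l c := by
  rw [mul_inv_eq_iff_eq_mul]
  apply Units.ext
  simp only [Units.val_mul]
  rw [TS_val D hij, TS_val D hjl, TS_val D hil]
  have hZ := D.Xmat_comm hij hjl hil a c
  have h1 : D.Xmat i l (a * c) * D.Xmat j l c = 0 :=
    D.Xmat_mul_zero (ne_of_fst hjl.symm) (Idx.neg_ne l).symm (ne_of_fst hij) (ne_of_fst hil) _ _
  have h2 : D.Xmat i l (a * c) * D.Xmat i j a = 0 :=
    D.Xmat_mul_zero (ne_of_fst hil.symm) (ne_of_fst hjl.symm) (Idx.neg_ne i) (ne_of_fst hij) _ _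
  generalize D.Xmat i l (a * c) = Z at *
  generalize D.Xmat i j a = X at *
  generalize D.Xmat j l c = W at *
  have : (1 + Z) * (1 + W) * (1 + X) = 1 + X + W + W * X + Z + Z * X + Z * W + Z * W * X := by
    noncomm_ring
  rw [this, h1, h2, ← hZ]
  noncomm_ring

theorem Xmat_flip (D : FormRingData A) (i j : Idx n) (c : A) :
    D.Xmat (Idx.neg j) (Idx.neg i) (-(D.lp i.2 j.2 * D.bar c)) = D.Xmat i j c := by
  unfold Xmat
  simp only [lpow_eps, Idx.neg_neg]
  simp only [Idx.neg, lp_neg, map_neg, D.bar_mul, D.bar_bar, D.bar_lp, stdBasisMatrix_neg', mul_neg]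
  rw [← D.lp_comm, ← mul_assoc, D.lp_mul]
  have : D.lp j.2 j.2 = 1 := by simp [lp]
  rw [this, one_mul]
  abel

theorem TS_flip (D : FormRingData A) {i j : Idx n} (h : i.1 ≠ j.1) (c : A) :
    D.TS i j c = D.TS (Idx.neg j) (Idx.neg i) (-(D.lp i.2 j.2 * D.bar c)) := by
  apply Units.ext
  rw [TS_val D h, TS_val D (i := Idx.neg j) (j := Idx.neg i) h.symm, Xmat_flip]

theorem T_eq_TS (D : FormRingData A) {i j : Idx n} (h : i.1 ≠ j.1) (c : A) :
    D.T i j c = D.TS i j c := by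
  unfold T
  rw [if_neg (ne_of_fst (i := j) (j := Idx.neg i) h.symm)]

theorem TL_commute (D : FormRingData A) {i j k : Idx n} (hij : i.1 ≠ j.1) (hi : k.1 ≠ i.1)
    (hj : k.1 ≠ j.1) (g c : A) : Commute (D.TL k g) (D.TS i j c) := by
  apply Units.ext
  rw [Units.val_mul, Units.val_mul, TS_val D hij]
  simp only [TL, Xmat, mul_add, add_mul, mul_sub, sub_mul, one_mul, mul_one]
  rw [Matrix.single_mul_single_of_ne _ _ _ _ (show Idx.neg k ≠ i from ne_of_fst hi),
    Matrix.single_mul_single_of_ne _ _ _ _ (show Idx.neg k ≠ Idx.neg j from ne_of_fst hj),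
    Matrix.single_mul_single_of_ne _ _ _ _ (show j ≠ k from ne_of_fst hj.symm),
    Matrix.single_mul_single_of_ne _ _ _ _ (show Idx.neg i ≠ k from ne_of_fst hi.symm)]
  abel

theorem lpow_long (D : FormRingData A) (i : Idx n) :
    D.lpow (-(Idx.eps i + 1) / 2) = D.lp i.2 false := by
  unfold Idx.eps lp
  cases i.2 <;> simp [lpow_zero, lpow_neg_one]

set_option linter.unusedSimpArgs false in
theorem TL_rel (D : FormRingData A) {i l : Idx n} (h : l.1 ≠ i.1) (hs : l.2 = i.2) (g : A)
    (hg : g ∈ D.Lambda) :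
    D.TS (Idx.neg l) (Idx.neg i) 1 * D.TL l (D.lpow (-(Idx.eps l + 1) / 2) * g)
      * (D.TS (Idx.neg l) (Idx.neg i) 1)⁻¹ =
    D.TL l (D.lpow (-(Idx.eps l + 1) / 2) * g) *
      D.TS l (Idx.neg i) (-(D.lpow (-(Idx.eps l + 1) / 2) * g)) *
      D.TL i (D.lpow (-(Idx.eps i + 1) / 2) * g) := by
  have h' : (Idx.neg l).1 ≠ (Idx.neg i).1 := h
  have h'' : l.1 ≠ (Idx.neg i).1 := h
  rw [mul_inv_eq_iff_eq_mul]
  apply Units.ext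
  simp only [Units.val_mul]
  rw [TS_val D h', TS_val D h'', Xmat_neg]
  simp only [TL, Xmat, lpow_eps, lpow_long, Idx.neg_neg]
  have e1 : D.lp (Idx.neg l).2 (Idx.neg i).2 = 1 := by simp [lp, Idx.neg, hs]
  have e2 : D.lp l.2 (Idx.neg i).2 * D.bar (D.lp l.2 false * g) = -(D.lp l.2 false * g) := by
    have hx := D.lambdaMax_mem g hg
    have hx2 : D.bar D.lam * g = - D.bar g := by
      conv_lhs => rw [hx]
      rw [mul_neg, ← mul_assoc, D.bar_lam_mul, one_mul]
    rw [D.bar_mul, bar_lp]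
    simp only [Idx.neg, ← hs]
    cases l.2 <;> simp [lp]
    · exact eq_neg_of_add_eq_zero_left (add_eq_zero_iff_eq_neg'.mpr hx)
    · rw [← D.lam_comm, ← mul_assoc, D.bar_lam_mul, one_mul, hx2, _root_.neg_neg]
  rw [e1, e2, hs, D.bar_one, one_mul]
  generalize D.lp i.2 false * g = γ
  have a1 : l ≠ Idx.neg l := (Idx.neg_ne l).symm
  have a2 : i ≠ Idx.neg i := (Idx.neg_ne i).symm
  have a3 : l ≠ i := ne_of_fst h
  have a4 : l ≠ Idx.neg i := ne_of_fst h
  have a5 : i ≠ Idx.neg l := ne_of_fst h.symm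
  have a6 : Idx.neg l ≠ Idx.neg i := ne_of_fst h
  simp only [mul_add, add_mul, mul_sub, sub_mul, one_mul, mul_one, stdBasisMatrix_neg',
    Matrix.single_mul_single_same, neg_mul, mul_neg, sub_neg_eq_add, neg_add_rev,
    Matrix.single_mul_single_of_ne _ _ _ _ a1, Matrix.single_mul_single_of_ne _ _ _ _ a2,
    Matrix.single_mul_single_of_ne _ _ _ _ a3, Matrix.single_mul_single_of_ne _ _ _ _ a4,
    Matrix.single_mul_single_of_ne _ _ _ _ a5, Matrix.single_mul_single_of_ne _ _ _ _ a6,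
    Matrix.single_mul_single_of_ne _ _ _ _ a1.symm, Matrix.single_mul_single_of_ne _ _ _ _ a2.symm,
    Matrix.single_mul_single_of_ne _ _ _ _ a3.symm, Matrix.single_mul_single_of_ne _ _ _ _ a4.symm,
    Matrix.single_mul_single_of_ne _ _ _ _ a5.symm, Matrix.single_mul_single_of_ne _ _ _ _ a6.symm,
    add_zero, zero_add, neg_zero, sub_zero, zero_mul, mul_zero]
  abel

theorem EU_conj (D : FormRingData A) (I Γ : AddSubgroup A) {x y : GLn A n}
    (hx : x ∈ D.EUmax n) (hy : y ∈ D.EU n I Γ) : x * y * x⁻¹ ∈ D.EU n I Γ := by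
  unfold EU at hy
  induction hy using Subgroup.closure_induction with
  | mem y hy =>
    obtain ⟨g, hg, t, ht, rfl⟩ := hy
    refine Subgroup.subset_closure ⟨x * g, mul_mem hx hg, t, ht, ?_⟩
    group
  | one => simp [one_mem]
  | mul a b _ _ ha hb =>
    have : x * (a * b) * x⁻¹ = (x * a * x⁻¹) * (x * b * x⁻¹) := by group
    rw [this]; exact mul_mem ha hb
  | inv a _ ha =>
    have : x * a⁻¹ * x⁻¹ = (x * a * x⁻¹)⁻¹ := by group
    rw [this]; exact inv_mem ha

/-- Elements of `EU(2n,A,Λ)` centralising `y` modulo `EU(2n,I,Γ)`. -/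
def Cen (D : FormRingData A) (n : ℕ) (I Γ : AddSubgroup A) (y : GLn A n) :
    Subgroup (GLn A n) where
  carrier := {x | x ∈ D.EUmax n ∧ x * y * x⁻¹ * y⁻¹ ∈ D.EU n I Γ}
  one_mem' := ⟨one_mem _, by simp [one_mem]⟩
  mul_mem' := by
    rintro u v ⟨hu, hu'⟩ ⟨hv, hv'⟩
    refine ⟨mul_mem hu hv, ?_⟩
    have : u * v * y * (u * v)⁻¹ * y⁻¹ =
      (u * (v * y * v⁻¹ * y⁻¹) * u⁻¹) * (u * y * u⁻¹ * y⁻¹) := by group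
    rw [this]; exact mul_mem (D.EU_conj I Γ hu hv') hu'
  inv_mem' := by
    rintro u ⟨hu, hu'⟩
    refine ⟨inv_mem hu, ?_⟩
    have : u⁻¹ * y * u⁻¹⁻¹ * y⁻¹ = u⁻¹ * (u * y * u⁻¹ * y⁻¹)⁻¹ * u⁻¹⁻¹ := by group
    rw [this]; exact D.EU_conj I Γ (inv_mem hu) (inv_mem hu')

theorem TS_mem_EUmax (D : FormRingData A) {k l : Idx n} (h : k.1 ≠ l.1) (c : A) :
    D.TS k l c ∈ D.EUmax n :=
  Subgroup.subset_closure (Or.inl ⟨k, l, ne_of_fst h, ne_of_fst (j := Idx.neg l) h, c, trivial, rfl⟩)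

theorem TL_mem_EUmax (D : FormRingData A) (k : Idx n) {g : A} (hg : g ∈ D.Lambda) :
    D.TL k (D.lpow (-(Idx.eps k + 1) / 2) * g) ∈ D.EUmax n :=
  Subgroup.subset_closure (Or.inr ⟨k, g, hg, rfl⟩)

theorem TS_mem_EU (D : FormRingData A) {I Γ : AddSubgroup A} {k l : Idx n} (h : k.1 ≠ l.1)
    {c : A} (hc : c ∈ I) : D.TS k l c ∈ D.EU n I Γ :=
  Subgroup.subset_closure ⟨1, one_mem _, _,
    Or.inl ⟨k, l, ne_of_fst h, ne_of_fst (j := Idx.neg l) h, c, hc, rfl⟩, by simp⟩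

theorem mem_Cen_of_commute (D : FormRingData A) {I Γ : AddSubgroup A} {x y : GLn A n}
    (hx : x ∈ D.EUmax n) (h : Commute x y) : x ∈ D.Cen n I Γ y := by
  refine ⟨hx, ?_⟩
  rw [h.eq]; simp [one_mem]

/-- column pair -/
def UU (D : FormRingData A) (i j l : Idx n) (x y : A) : GLn A n := D.TS i l x * D.TS j l y

theorem UU_conj₁ (D : FormRingData A) {i j l : Idx n} (hij : i.1 ≠ j.1) (hjl : j.1 ≠ l.1)
    (hil : i.1 ≠ l.1) (a x y : A) :
    D.TS i j a * D.UU i j l x y * (D.TS i j a)⁻¹ = D.UU i j l (x + a * y) y := by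
  unfold UU
  have hc : Commute (D.TS i j a) (D.TS i l x) :=
    D.TS_commute hij hil hij.symm hil (ne_of_fst (j := Idx.neg l) hjl) (Idx.neg_ne i) _ _
  have : D.TS i j a * (D.TS i l x * D.TS j l y) * (D.TS i j a)⁻¹ =
    (D.TS i j a * D.TS i l x) * (D.TS i j a)⁻¹ *
      (D.TS i j a * D.TS j l y * (D.TS i j a)⁻¹) := by group
  rw [this, hc.eq, D.TS_rel hij hjl hil, D.TS_add hil]
  group

theorem UU_swap (D : FormRingData A) {i j l : Idx n} (hij : i.1 ≠ j.1) (hjl : j.1 ≠ l.1)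
    (hil : i.1 ≠ l.1) (x y : A) : D.UU i j l x y = D.UU j i l y x :=
  (D.TS_commute hil hjl hjl.symm hil (Idx.neg_ne l).symm
    (ne_of_fst (i := Idx.neg i) hij) _ _).eq

theorem UU_add (D : FormRingData A) {i j l : Idx n} (hij : i.1 ≠ j.1) (hjl : j.1 ≠ l.1)
    (hil : i.1 ≠ l.1) (x y x' y' : A) :
    D.UU i j l x y * D.UU i j l x' y' = D.UU i j l (x + x') (y + y') := by
  have := D.UU_swap hij hjl hil x' y
  unfold UU at *
  rw [D.TS_add hil, D.TS_add hjl, mul_assoc, ← mul_assoc (D.TS j l y), ← this]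
  group

theorem UU_inv (D : FormRingData A) {i j l : Idx n} (hij : i.1 ≠ j.1) (hjl : j.1 ≠ l.1)
    (hil : i.1 ≠ l.1) (x y : A) : (D.UU i j l x y)⁻¹ = D.UU i j l (-x) (-y) := by
  rw [eq_comm, eq_inv_iff_mul_eq_one, D.UU_add hij hjl hil]
  simp [UU, D.TS_zero hil, D.TS_zero hjl]

theorem UU_conj₂ (D : FormRingData A) {i j l : Idx n} (hij : i.1 ≠ j.1) (hjl : j.1 ≠ l.1)
    (hil : i.1 ≠ l.1) (b x y : A) :
    D.TS j i b * D.UU i j l x y * (D.TS j i b)⁻¹ = D.UU i j l x (y + b * x) := by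
  rw [D.UU_swap hij hjl hil, D.UU_conj₁ hij.symm hil hjl, D.UU_swap hij.symm hil hjl]

theorem UU_conjY (D : FormRingData A) {i j l : Idx n} (hij : i.1 ≠ j.1) (hjl : j.1 ≠ l.1)
    (hil : i.1 ≠ l.1) (a b x y : A) :
    D.Y i j a b * D.UU i j l x y * (D.Y i j a b)⁻¹ =
      D.UU i j l (x + a * (b * (x - a * (y - b * x))) + a * (y - b * x) - a * (y - b * x))
        (y - b * x + b * (x - a * (y - b * x))) := by
  unfold Y
  rw [T_eq_TS D hij, T_eq_TS D hij.symm, commutatorElement_def, ← D.TS_neg hij,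
    ← D.TS_neg hij.symm]
  have : ∀ p q r s u : GLn A n, p * q * r * s * u * (p * q * r * s)⁻¹ =
    p * (q * (r * (s * u * s⁻¹) * r⁻¹) * q⁻¹) * p⁻¹ := by intros; group
  rw [this, D.UU_conj₂ hij hjl hil, D.UU_conj₁ hij hjl hil, D.UU_conj₂ hij hjl hil,
    D.UU_conj₁ hij hjl hil]
  congr 1 <;> noncomm_ring

section main
variable {D : FormRingData A} (FI FJ : FormIdeal D)

theorem symI_left {I J : AddSubgroup A} {a b : A} (ha : a ∈ I) (hb : b ∈ J) :
    a * b ∈ symI I J :=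
  AddSubgroup.mem_sup_left (AddSubgroup.subset_closure ⟨a, ha, b, hb, rfl⟩)

theorem symI_right {I J : AddSubgroup A} {a b : A} (ha : a ∈ I) (hb : b ∈ J) :
    b * a ∈ symI I J :=
  AddSubgroup.mem_sup_right (AddSubgroup.subset_closure ⟨b, hb, a, ha, rfl⟩)

theorem UU_mem_Cen {i j l : Idx n} (hij : i.1 ≠ j.1) (hjl : j.1 ≠ l.1)
    (hil : i.1 ≠ l.1) {a b : A} (ha : a ∈ FI.I) (hb : b ∈ FJ.I) (x y : A) (Γ : AddSubgroup A) :
    D.UU i j l x y ∈ D.Cen n (symI FI.I FJ.I) Γ (D.Y i j a b) := by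
  refine ⟨mul_mem (D.TS_mem_EUmax hil x) (D.TS_mem_EUmax hjl y), ?_⟩
  have : D.UU i j l x y * D.Y i j a b * (D.UU i j l x y)⁻¹ * (D.Y i j a b)⁻¹ =
    D.UU i j l x y * (D.Y i j a b * (D.UU i j l x y)⁻¹ * (D.Y i j a b)⁻¹) := by group
  rw [this, D.UU_inv hij hjl hil, D.UU_conjY hij hjl hil, D.UU_add hij hjl hil]
  refine mul_mem (D.TS_mem_EU hil ?_) (D.TS_mem_EU hjl ?_)
  · convert symI_left ha (FJ.mul_mem_right (-x - a * (-y - b * -x)) b hb) using 1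
    noncomm_ring
  · convert symI_right (FI.mul_mem_right (-(-y - b * -x)) a ha) hb using 1
    noncomm_ring

theorem mixed_mem_Cen₀ {i j k l : Idx n} (hij : i.1 ≠ j.1) (hjl : j.1 ≠ l.1)
    (hil : i.1 ≠ l.1) {a b : A} (ha : a ∈ FI.I) (hb : b ∈ FJ.I) (x : A) (Γ : AddSubgroup A)
    (hk : k = i ∨ k = j) :
    D.TS k l x ∈ D.Cen n (symI FI.I FJ.I) Γ (D.Y i j a b) := by
  rcases hk with rfl | rfl
  · have := UU_mem_Cen FI FJ hij hjl hil ha hb x 0 Γ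
    rwa [UU, D.TS_zero hjl, mul_one] at this
  · have := UU_mem_Cen FI FJ hij hjl hil ha hb 0 x Γ
    rwa [UU, D.TS_zero hil, one_mul] at this

theorem eq_or_neg {k i : Idx n} (h : k.1 = i.1) : k = i ∨ k = Idx.neg i := by
  rcases k with ⟨k, p⟩
  rcases i with ⟨i, q⟩
  dsimp only at h
  subst h
  cases p <;> cases q <;> simp [Idx.neg]

theorem mixed_mem_Cen {i j k l : Idx n} (hij : i.1 ≠ j.1) (hjl : j.1 ≠ l.1)
    (hil : i.1 ≠ l.1) {a b : A} (ha : a ∈ FI.I) (hb : b ∈ FJ.I) (x : A) (Γ : AddSubgroup A)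
    (hk : k.1 = i.1 ∨ k.1 = j.1) :
    D.TS k l x ∈ D.Cen n (symI FI.I FJ.I) Γ (D.Y i j a b) := by
  have h1 := fun hk => mixed_mem_Cen₀ FI FJ (k := k) hij hjl hil ha hb x Γ hk
  have hY : D.Y i j a b = D.Y (Idx.neg j) (Idx.neg i) (-(D.lp i.2 j.2 * D.bar a))
      (-(D.lp j.2 i.2 * D.bar b)) := by
    unfold Y
    rw [T_eq_TS D hij, T_eq_TS D hij.symm, T_eq_TS D (i := Idx.neg j) (j := Idx.neg i) hij.symm,
      T_eq_TS D (i := Idx.neg i) (j := Idx.neg j) hij, D.TS_flip hij, D.TS_flip hij.symm]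
  have h2 := fun hk => mixed_mem_Cen₀ FI FJ (k := k) (l := l) (i := Idx.neg j) (j := Idx.neg i)
    hij.symm hil hjl
    (neg_mem (FI.mul_mem_left (D.lp i.2 j.2) _ (FI.bar_mem a ha)))
    (neg_mem (FJ.mul_mem_left (D.lp j.2 i.2) _ (FJ.bar_mem b hb))) x Γ hk
  rw [← hY] at h2
  rcases hk with h | h <;> rcases eq_or_neg h with h | h
  · exact h1 (Or.inl h)
  · exact h2 (Or.inr h)
  · exact h1 (Or.inr h)
  · exact h2 (Or.inl h)

theorem mixed_mem_Cen' {i j k l : Idx n} (hij : i.1 ≠ j.1) (hjl : j.1 ≠ l.1)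
    (hil : i.1 ≠ l.1) {a b : A} (ha : a ∈ FI.I) (hb : b ∈ FJ.I) (x : A) (Γ : AddSubgroup A)
    (hk : k.1 = i.1 ∨ k.1 = j.1) :
    D.TS l k x ∈ D.Cen n (symI FI.I FJ.I) Γ (D.Y i j a b) := by
  have hlk : l.1 ≠ k.1 := by
    rcases hk with h | h <;> rw [h]
    · exact hil.symm
    · exact hjl.symm
  rw [D.TS_flip hlk]
  exact mixed_mem_Cen FI FJ (k := Idx.neg k) (l := Idx.neg l) hij hjl hil ha hb _ Γ hk

theorem commute_Y {i j : Idx n} (hij : i.1 ≠ j.1) {x : GLn A n} {a b : A}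
    (h1 : Commute x (D.TS i j a)) (h2 : Commute x (D.TS j i b)) : Commute x (D.Y i j a b) := by
  unfold Y
  rw [T_eq_TS D hij, T_eq_TS D hij.symm, commutatorElement_def]
  exact ((h1.mul_right h2).mul_right h1.inv_right).mul_right h2.inv_right

theorem EUmax_le_Cen (hn : 3 ≤ n) {i j : Idx n} (hij : i.1 ≠ j.1)
    {a b : A} (ha : a ∈ FI.I) (hb : b ∈ FJ.I) (Γ : AddSubgroup A) :
    D.EUmax n ≤ D.Cen n (symI FI.I FJ.I) Γ (D.Y i j a b) := by
  obtain ⟨m, hmi, hmj⟩ : ∃ m : Fin n, i.1 ≠ m ∧ j.1 ≠ m := by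
    have : ({i.1, j.1} : Finset (Fin n)).card < Fintype.card (Fin n) := by
      have := Finset.card_le_two (a := i.1) (b := j.1)
      rw [Fintype.card_fin]; omega
    obtain ⟨m, hm⟩ := Finset.exists_mem_notMem_of_card_lt_card
      (s := {i.1, j.1}) (t := Finset.univ) (by simpa using this)
    simp only [Finset.mem_insert, Finset.mem_singleton, not_or] at hm
    exact ⟨m, Ne.symm hm.2.1, Ne.symm hm.2.2⟩
  have longout : ∀ (k : Idx n), k.1 ≠ i.1 → k.1 ≠ j.1 → ∀ g ∈ D.Lambda,
      D.TL k (D.lpow (-(Idx.eps k + 1) / 2) * g) ∈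
        D.Cen n (symI FI.I FJ.I) Γ (D.Y i j a b) := by
    intro k hki hkj g hg
    exact D.mem_Cen_of_commute (D.TL_mem_EUmax k hg)
      (commute_Y hij (D.TL_commute hij hki hkj _ _) (D.TL_commute hij.symm hkj hki _ _))
  unfold EUmax FU
  rw [Subgroup.closure_le]
  rintro x (⟨k, l, hkl, hkl', c, -, rfl⟩ | ⟨k, g, hg, rfl⟩)
  · have hkl1 : k.1 ≠ l.1 := fun e => (eq_or_neg e).elim hkl hkl'
    by_cases hk : k.1 = i.1 ∨ k.1 = j.1 <;> by_cases hl : l.1 = i.1 ∨ l.1 = j.1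
    · have m1 := mixed_mem_Cen FI FJ (k := k) (l := (m, true)) hij hmj hmi ha hb c Γ hk
      have m2 := mixed_mem_Cen' FI FJ (k := l) (l := (m, true)) hij hmj hmi ha hb 1 Γ hl
      have hkm : k.1 ≠ m := by rcases hk with h | h <;> rw [h] <;> assumption
      have hlm : m ≠ l.1 := by rcases hl with h | h <;> rw [h] <;> apply Ne.symm <;> assumption
      have r := D.TS_rel (i := k) (j := (m, true)) (l := l) hkm hlm hkl1 c 1
      rw [mul_one, ← mul_inv_eq_iff_eq_mul] at r
      rw [SetLike.mem_coe, ← r]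
      exact mul_mem (mul_mem (mul_mem m1 m2) (inv_mem m1)) (inv_mem m2)
    · push Not at hl
      exact mixed_mem_Cen FI FJ hij hl.2.symm hl.1.symm ha hb c Γ hk
    · push Not at hk
      exact mixed_mem_Cen' FI FJ hij hk.2.symm hk.1.symm ha hb c Γ hl
    · push Not at hk hl
      refine D.mem_Cen_of_commute (D.TS_mem_EUmax hkl1 c) (commute_Y hij ?_ ?_)
      · exact D.TS_commute hkl1 hij hl.1 hk.2 (ne_of_fst (j := Idx.neg j) hl.2)
          (ne_of_fst (i := Idx.neg k) hk.1) _ _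
      · exact D.TS_commute hkl1 hij.symm hl.2 hk.1 (ne_of_fst (j := Idx.neg i) hl.1)
          (ne_of_fst (i := Idx.neg k) hk.2) _ _
  · by_cases hk : k.1 = i.1 ∨ k.1 = j.1
    · have hkm : m ≠ k.1 := by rcases hk with h | h <;> rw [h] <;> apply Ne.symm <;> assumption
      have r := D.TL_rel (i := k) (l := (m, k.2)) hkm rfl g hg
      have m1 := mixed_mem_Cen' FI FJ (k := Idx.neg k) (l := Idx.neg (m, k.2)) hij hmj hmi
        ha hb 1 Γ hk
      have m2 := mixed_mem_Cen' FI FJ (k := Idx.neg k) (l := (m, k.2)) hij hmj hmi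
        ha hb (-(D.lpow (-(Idx.eps ((m, k.2) : Idx n) + 1) / 2) * g)) Γ hk
      have m3 := longout (m, k.2) hmi.symm hmj.symm g hg
      rw [← inv_mul_eq_iff_eq_mul] at r
      rw [SetLike.mem_coe, ← r]
      exact mul_mem (inv_mem (mul_mem m3 m2)) (mul_mem (mul_mem m1 m3) (inv_mem m1))
    · push Not at hk
      exact longout k hk.1 hk.2 g hg

end main

end FormRingData

/-- Lemma 6: short root elementary commutators `Y_{ij}(a,b)` are invariant
under conjugation by `EU(2n,A,Λ)` modulo `EU(2n,(I,Γ)∘(J,Δ))`. -/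
theorem statement8 {A : Type*} [Ring A] (D : FormRingData A) (n : ℕ) (hn : 3 ≤ n)
    (FI FJ : FormIdeal D) (i j : Idx n) (hij : i ≠ j) (hij' : i ≠ Idx.neg j)
    (a : A) (ha : a ∈ FI.I) (b : A) (hb : b ∈ FJ.I)
    (x : GLn A n) (hx : x ∈ D.EUmax n) :
    x * D.Y i j a b * x⁻¹ * (D.Y i j a b)⁻¹ ∈
      D.EUsym n FI.I FI.Gamma FJ.I FJ.Gamma := by
  exact (FormRingData.EUmax_le_Cen FI FJ hn
    (fun e => (FormRingData.eq_or_neg e).elim hij hij') ha hb _ hx).2
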